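/- Fix Δv > 0 and grid points v_j = jΔv for j ∈ ℤ³. Let f : ℤ³ → ℝ with f_j > 0 for all j, and assume f decays fast enough (e.g. Gaussian-type decay with |log f_j| of polynomial growth) that Σ_j ‖g^ε_j‖ (1 + ‖v_j‖²) < ∞ for every ε ∈ {−1,+1}³, where g^ε is the discrete Lorentz flux. Then the discrete Lorentz operator conserves mass: Σ_{j∈ℤ³} C^{Δv}(f)(v_j) = 0. -/

import Mathlib

/-!
Mass conservation is a telescoping identity. The moment bound makes every component of every flux
`g^ε` absolutely summable over ℤ³, and each term of `D^{*,ε} g^ε` is a multiple of the difference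
between a component of `g^ε` and its translate by `ε_s e_s`. Translation is a bijection of ℤ³, so
the two summable families have the same sum and the difference sums to zero
(`hasSum_sub_shift`). Since only finitely many `ε` and `s` occur, the sums may be interchanged.
-/

open scoped BigOperators Classical

noncomputable section

/-- Velocity indices: ℤ³. -/
abbrev J3 := Fin 3 → ℤ

/-- ℝ³ as functions `Fin 3 → ℝ`. -/
abbrev V3 := Fin 3 → ℝ

/-- Squared Euclidean norm on ℝ³. -/
def nsq (v : V3) : ℝ := ∑ s, v s ^ 2

/-- The sign ε_s ∈ {−1,+1} encoded by a boolean. -/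
def sgn (σ : Fin 3 → Bool) (s : Fin 3) : ℤ := if σ s then 1 else -1

/-- The velocity grid point v_j = jΔv. -/
def vj (Δv : ℝ) (j : J3) : V3 := fun s => (j s : ℝ) * Δv

/-- Uncentered difference operator `D^ε`: the s-th component of `(D^ε ψ)_j` is
`ε_s (ψ_{j+ε_s e_s} − ψ_j)/Δv`. -/
def Dd (Δv : ℝ) (σ : Fin 3 → Bool) (ψ : J3 → ℝ) (j : J3) : V3 :=
  fun s => (sgn σ s : ℝ) * (ψ (Function.update j s (j s + sgn σ s)) - ψ j) / Δv

/-- Formal ℓ²-adjoint of `D^ε` on vector sequences: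
`(D^{*,ε} g)_j = −Σ_s ε_s (g_{j,s} − g_{j−ε_s e_s,s})/Δv`. -/
def Dstar (Δv : ℝ) (σ : Fin 3 → Bool) (g : J3 → V3) (j : J3) : ℝ :=
  -∑ s, (sgn σ s : ℝ) * (g j s - g (Function.update j s (j s - sgn σ s)) s) / Δv

/-- S(w) = ‖w‖² Id − w ⊗ w. -/
def Smat (w : V3) : Matrix (Fin 3) (Fin 3) ℝ :=
  nsq w • (1 : Matrix (Fin 3) (Fin 3) ℝ) - Matrix.vecMulVec w w

/-- The averaged grid point ṽ_j^ε = (v_j + v_{j+ε})/2. -/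
def vtilde (Δv : ℝ) (σ : Fin 3 → Bool) (j : J3) : V3 :=
  fun s => (vj Δv j s + vj Δv (fun t => j t + sgn σ t) s) / 2

/-- The discrete Lorentz flux
`g^ε_j = ‖v_j‖⁻³ S(ṽ_j^ε) f_j D^ε(log f)_j` (and `0` at `v_j = 0`). -/
def gflux (Δv : ℝ) (σ : Fin 3 → Bool) (f : J3 → ℝ) (j : J3) : V3 :=
  if vj Δv j = 0 then 0
  else ((Real.sqrt (nsq (vj Δv j))) ^ 3)⁻¹ •
    (Smat (vtilde Δv σ j)).mulVec (f j • Dd Δv σ (fun i => Real.log (f i)) j)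

/-- The discrete Lorentz operator, averaged over the eight uncentered discretizations:
`C^{Δv}(f)(v_j) = (1/8) Σ_ε (−D^{*,ε} g^ε)_j`. -/
def CLdisc (Δv : ℝ) (f : J3 → ℝ) (j : J3) : ℝ :=
  (1 / 8) * ∑ σ : Fin 3 → Bool, -Dstar Δv σ (gflux Δv σ f) j

/-- Summation by parts against a constant: a summable family on ℤ³ and its translate along a
coordinate axis have the same sum, so their difference sums to zero. -/
lemma hasSum_sub_shift {h : J3 → ℝ} (hh : Summable h) (s : Fin 3) (c : ℤ) :
    HasSum (fun j : J3 => h j - h (Function.update j s (j s - c))) 0 := by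
  have hshift : HasSum (fun j : J3 => h (Function.update j s (j s - c))) (∑' j, h j) := by
    have e : (fun j : J3 => h (Function.update j s (j s - c)))
        = h ∘ Equiv.subRight (Pi.single s c : J3) := by
      -- replacing `j s` by `j s - c` is subtraction of the vector `c e_s`
      funext j
      refine congrArg h (funext fun t => ?_)
      by_cases hts : t = s
      · subst hts; simp
      · simp [hts]
    rw [e, Equiv.hasSum_iff]
    exact hh.hasSum
  simpa using hh.hasSum.sub hshift

lemma hasSum_Dstar (Δv : ℝ) (σ : Fin 3 → Bool) {g : J3 → V3}
    (hg : ∀ s, Summable fun j => g j s) : HasSum (Dstar Δv σ g) 0 := by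
  have h := (hasSum_sum (s := Finset.univ) fun s _ =>
    ((hasSum_sub_shift (hg s) s (sgn σ s)).mul_left (sgn σ s : ℝ)).div_const Δv).neg
  unfold Dstar
  simpa only [mul_zero, zero_div, Finset.sum_const_zero, neg_zero] using h

lemma nsq_nonneg (v : V3) : 0 ≤ nsq v := Finset.sum_nonneg fun s _ => sq_nonneg (v s)

/-- The weighted summability of the flux norm gives summability of each flux component, because the
weight is at least one. -/
lemma summable_component {Δv : ℝ} {g : J3 → V3}
    (hg : Summable fun j : J3 => ‖g j‖ * (1 + nsq (vj Δv j))) (s : Fin 3) :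
    Summable fun j => g j s := by
  refine Summable.of_norm_bounded hg fun j => (norm_le_pi_norm (g j) s).trans ?_
  exact le_mul_of_one_le_right (norm_nonneg _) (by linarith [nsq_nonneg (vj Δv j)])

/-- the discrete Lorentz operator conserves mass. -/
theorem discrete_lorentz_conserves_mass
    (Δv : ℝ) (hΔv : 0 < Δv)
    (f : J3 → ℝ) (hpos : ∀ j, 0 < f j)
    (hsum : ∀ σ : Fin 3 → Bool,
      Summable fun j : J3 => ‖gflux Δv σ f j‖ * (1 + nsq (vj Δv j))) :
    ∑' j : J3, CLdisc Δv f j = 0 := by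
  have h := (hasSum_sum (s := Finset.univ) fun σ _ =>
    (hasSum_Dstar Δv σ (summable_component (hsum σ))).neg).mul_left (1 / 8 : ℝ)
  have h0 : HasSum (CLdisc Δv f) 0 := by
    unfold CLdisc
    simpa only [neg_zero, Finset.sum_const_zero, mul_zero] using h
  exact h0.tsum_eq
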